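/- Let μ be a probability measure with infinite support contained in the unit circle ∂𝔻. For each n ∈ ℕ let Q_n be a polynomial of degree exactly n with leading coefficient τ_n, and suppose ‖Q_n‖_{L²(μ)} → 1 and τ_n/κ_n → 1 as n → ∞. Then Q_n/p_n(·;μ) → 1 in L²(∂𝔻, dθ/2π); that is, ∫₀^{2π} |Q_n(e^{iθ})/p_n(e^{iθ};μ) − 1|² dθ/(2π) → 0 as n → ∞. -/

import Mathlib

/-!
Expanding the square, the quantity to control is
`∫ |Q_n/p_n|² dθ/2π - 2 Re ∫ Q_n/p_n dθ/2π + 1`.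

The zeros of `p_n` lie in the open unit disk (`zeros_in_disk`), so `Q_n/p_n` is holomorphic outside
the disk, and its mean over the circle is its value `τ_n/κ_n` at infinity (`integral_div`).

The mean of `|Q_n/p_n|²` is `∫ |Q_n|² dμ`, by the Bernstein–Szegő identity: `μ` and
`dθ/(2π|p_n|²)` give the same integral to `|Q|²` whenever `deg Q ≤ n`. To see this, let
`f*(z) = z^n conj (f (1 / conj z))`. The zeros of `p_n*` lie outside the closed disk, so `p_n` and
`p_n*` are coprime and `Q* Q = u p_n + v p_n*` with `deg u, deg v ≤ n` (`exists_decomp`). On the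
circle this says `|Q|² = conj (u*) p_n + v conj p_n`, and both integrals are then computed from
the coefficients of `z^n` in `u*` and `v` alone: by orthogonality for `μ` (`inner_top`), and by the
mean value property for the other measure. `ratio_formula` combines these facts into the value
`‖Q_n‖² - 2 Re (τ_n/κ_n) + 1`, which tends to `1 - 2 + 1 = 0`.
-/


open MeasureTheory Filter Topology Polynomial

noncomputable section

/-- The closed support of a measure: the set of points all of whose neighborhoods
have positive measure. -/
def measSupport {α : Type*} [TopologicalSpace α] [MeasurableSpace α] (μ : Measure α) : Set α :=
  {x | ∀ U ∈ nhds x, μ U ≠ 0}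

/-- `p` is the sequence of orthonormal polynomials for `μ`, with positive real leading
coefficients `κ`. -/
def OrthonormalPolys (μ : Measure ℂ) (p : ℕ → Polynomial ℂ) (κ : ℕ → ℝ) : Prop :=
  (∀ n, (p n).degree = n) ∧ (∀ n, 0 < κ n) ∧ (∀ n, (p n).leadingCoeff = (κ n : ℂ)) ∧
  (∀ n m, ∫ z, (starRingEnd ℂ) ((p n).eval z) * (p m).eval z ∂μ
      = if n = m then 1 else 0)

/-! ### Reversed polynomials -/

/-- The reversed polynomial `f*(z) = z ^ n * conj (f (1 / conj z))`, for `f` of degree at most `n`.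
It is encoded by conjugating the coefficients and reversing their order about `n`. -/
def starPoly (n : ℕ) (f : ℂ[X]) : ℂ[X] := (f.map (starRingEnd ℂ)).reflect n

lemma eval_map_conj (f : ℂ[X]) (z : ℂ) :
    (f.map (starRingEnd ℂ)).eval z = starRingEnd ℂ (f.eval (starRingEnd ℂ z)) := by
  rw [← Polynomial.eval_map_apply, Complex.conj_conj]

lemma starPoly_eval {n : ℕ} {f : ℂ[X]} (hf : f.natDegree ≤ n) {z : ℂ} (hz : z ≠ 0) :
    (starPoly n f).eval z = z ^ n * starRingEnd ℂ (f.eval (starRingEnd ℂ z)⁻¹) := by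
  have hz' : z⁻¹ ≠ 0 := inv_ne_zero hz
  let : Invertible (z⁻¹) := invertibleOfNonzero hz'
  have h := eval₂_reflect_mul_pow (RingHom.id ℂ) (z⁻¹) n (f.map (starRingEnd ℂ))
    (natDegree_map_le.trans hf)
  have h1 : ⅟(z⁻¹) = z := by rw [invOf_eq_inv, inv_inv]
  rw [h1] at h
  change (starPoly n f).eval z * _ = (f.map (starRingEnd ℂ)).eval z⁻¹ at h
  rw [eval_map_conj, map_inv₀] at h
  rw [← h, inv_pow]
  field_simp

lemma inv_conj_of_norm_one {z : ℂ} (hz : ‖z‖ = 1) : (starRingEnd ℂ z)⁻¹ = z := by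
  have h : z * starRingEnd ℂ z = 1 := by
    rw [Complex.mul_conj, Complex.normSq_eq_norm_sq, hz]; simp
  exact inv_eq_of_mul_eq_one_left h

lemma starPoly_eval_circle {n : ℕ} {f : ℂ[X]} (hf : f.natDegree ≤ n) {z : ℂ} (hz : ‖z‖ = 1) :
    (starPoly n f).eval z = z ^ n * starRingEnd ℂ (f.eval z) := by
  have hz0 : z ≠ 0 := by rintro rfl; simp at hz
  rw [starPoly_eval hf hz0, inv_conj_of_norm_one hz]

lemma starPoly_eval_zero (n : ℕ) (f : ℂ[X]) :
    (starPoly n f).eval 0 = starRingEnd ℂ (f.coeff n) := by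
  rw [← coeff_zero_eq_eval_zero, starPoly, coeff_reflect, revAt_zero, coeff_map]

lemma starPoly_natDegree {n : ℕ} {f : ℂ[X]} (hf : f.natDegree ≤ n) :
    (starPoly n f).natDegree ≤ n := by
  refine natDegree_reflect_le.trans (max_le le_rfl (natDegree_map_le.trans hf))

/-- The reversed polynomial of a polynomial with all zeros in the open unit disk has none in the
closed unit disk. -/
lemma starPoly_ne_zero {n : ℕ} {p : ℂ[X]} (hp : p.natDegree = n)
    (hz : ∀ z, p.eval z = 0 → ‖z‖ < 1) {z : ℂ} (hz1 : ‖z‖ ≤ 1) : (starPoly n p).eval z ≠ 0 := by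
  rcases eq_or_ne z 0 with rfl | h0
  · rw [starPoly_eval_zero, ← hp]
    have hp0 : p ≠ 0 := by
      rintro rfl
      have := hz 1 (by simp)
      simp at this
    simpa using hp0
  · rw [starPoly_eval hp.le h0]
    refine mul_ne_zero (pow_ne_zero _ h0) ?_
    intro h
    have h2 := hz _ ((map_eq_zero _).1 h)
    rw [norm_inv, RCLike.norm_conj] at h2
    have : 1 ≤ ‖z‖⁻¹ := (one_le_inv₀ (norm_pos_iff.2 h0)).2 hz1
    linarith

/-! ### Decomposition of `Q* Q` -/

/-- Since `p` and `p*` are coprime, `Q* Q = u p + v p*` with `deg u, deg v ≤ n`. -/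
lemma exists_decomp {n : ℕ} {p Q : ℂ[X]} (hp : p.natDegree = n) (hQ : Q.natDegree ≤ n)
    (hz : ∀ z, p.eval z = 0 → ‖z‖ < 1) :
    ∃ u v : ℂ[X], u.natDegree ≤ n ∧ v.natDegree ≤ n ∧
      starPoly n Q * Q = u * p + v * starPoly n p := by
  have hp0 : p ≠ 0 := by
    rintro rfl
    have := hz 1 (by simp)
    simp at this
  have hco : IsCoprime p (starPoly n p) := by
    rw [isCoprime_iff_aeval_ne_zero_of_isAlgClosed ℂ ℂ]
    intro a
    by_cases h : p.eval a = 0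
    · right
      rw [coe_aeval_eq_eval]
      exact starPoly_ne_zero hp hz (hz a h).le
    · left
      rwa [coe_aeval_eq_eval]
  obtain ⟨a, b, hab⟩ := hco
  set f := starPoly n Q * Q with hf
  have hfd : f.natDegree ≤ n + n :=
    natDegree_mul_le.trans (add_le_add (starPoly_natDegree hQ) hQ)
  have hvd : (f * b % p).natDegree ≤ n :=
    hp ▸ natDegree_le_natDegree (EuclideanDomain.mod_lt (f * b) hp0).le
  have hdecomp : f = (f * a + f * b / p * starPoly n p) * p + (f * b % p) * starPoly n p := by
    have h := EuclideanDomain.div_add_mod (f * b) p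
    linear_combination (-f) * hab - starPoly n p * h
  refine ⟨_, _, ?_, hvd, hdecomp⟩
  set u := f * a + f * b / p * starPoly n p
  rcases eq_or_ne u 0 with hu | hu
  · simp [hu]
  · have h1 : (u * p).natDegree ≤ n + n := by
      have : u * p = f - (f * b % p) * starPoly n p := by linear_combination -hdecomp
      rw [this]
      refine (natDegree_sub_le _ _).trans (max_le hfd ?_)
      exact natDegree_mul_le.trans (add_le_add hvd (starPoly_natDegree hp.le))
    rw [natDegree_mul hu hp0, hp] at h1
    omega

/-- On the unit circle, the decomposition reads `|Q|² = conj (u*) p + v conj p`. -/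
lemma decomp_circle {n : ℕ} {p Q u v : ℂ[X]} (hp : p.natDegree = n) (hQ : Q.natDegree ≤ n)
    (hu : u.natDegree ≤ n) (h : starPoly n Q * Q = u * p + v * starPoly n p)
    {z : ℂ} (hz : ‖z‖ = 1) :
    starRingEnd ℂ (Q.eval z) * Q.eval z =
      starRingEnd ℂ ((starPoly n u).eval z) * p.eval z + starRingEnd ℂ (p.eval z) * v.eval z := by
  have hz0 : z ≠ 0 := by rintro rfl; simp at hz
  have h1 := congrArg (eval z) h
  simp only [eval_mul, eval_add, starPoly_eval_circle hQ hz, starPoly_eval_circle hp.le hz] at h1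
  rw [starPoly_eval_circle hu hz]
  have hc : starRingEnd ℂ z * z = 1 := by
    rw [mul_comm, Complex.mul_conj, Complex.normSq_eq_norm_sq, hz]; simp
  have hcn : starRingEnd ℂ z ^ n * z ^ n = 1 := by rw [← mul_pow, hc, one_pow]
  simp only [map_mul, map_pow, Complex.conj_conj]
  linear_combination starRingEnd ℂ z ^ n * h1 + (starRingEnd ℂ (p.eval z) * v.eval z
    - starRingEnd ℂ (Q.eval z) * Q.eval z) * hcn

/-! ### Mean value property in the exterior of the disk -/

/-- The mean value property outside the disk: `f / p` is holomorphic there and takes the value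
`f_n / p_n` at infinity. The proof applies the property to `f* / p*` in the disk. -/
lemma integral_div {n : ℕ} {p f : ℂ[X]} (hp : p.natDegree = n) (hf : f.natDegree ≤ n)
    (hz : ∀ z, p.eval z = 0 → ‖z‖ < 1) :
    ∫ θ in (0 : ℝ)..(2 * Real.pi), f.eval (Complex.exp (θ * Complex.I)) /
      p.eval (Complex.exp (θ * Complex.I)) = 2 * Real.pi * (f.coeff n / p.leadingCoeff) := by
  have hd : ∀ z ∈ Metric.closedBall (0 : ℂ) |1|,
      DifferentiableAt ℂ (fun z => (starPoly n f).eval z / (starPoly n p).eval z) z := by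
    intro z hzb
    refine (starPoly n f).differentiableAt.div (starPoly n p).differentiableAt ?_
    exact starPoly_ne_zero hp hz (by simpa using hzb)
  have h := circleAverage_of_differentiable_on_off_countable (c := (0 : ℂ)) (R := 1)
    Set.countable_empty (fun z hz => (hd z hz).continuousAt.continuousWithinAt)
    (fun z hz => hd z (Metric.ball_subset_closedBall hz.1))
  rw [Real.circleAverage_def] at h
  have hpt : ∀ θ : ℝ, (starPoly n f).eval (circleMap 0 1 θ) / (starPoly n p).eval (circleMap 0 1 θ)
      = starRingEnd ℂ (f.eval (Complex.exp (θ * Complex.I)) /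
        p.eval (Complex.exp (θ * Complex.I))) := by
    intro θ
    have h1 := Complex.norm_exp_ofReal_mul_I θ
    have hc : circleMap 0 1 θ = Complex.exp (θ * Complex.I) := by simp [circleMap]
    rw [hc, starPoly_eval_circle hf h1, starPoly_eval_circle hp.le h1, map_div₀,
      mul_div_mul_left _ _ (pow_ne_zero _ (Complex.exp_ne_zero _))]
  simp only [hpt] at h
  rw [intervalIntegral.integral_of_le Real.two_pi_pos.le, integral_conj,
    ← intervalIntegral.integral_of_le Real.two_pi_pos.le, starPoly_eval_zero, starPoly_eval_zero,
    ← map_div₀, Complex.real_smul] at h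
  have hpi : (Real.pi : ℂ) ≠ 0 := by exact_mod_cast Real.pi_ne_zero
  have h2 := congrArg (starRingEnd ℂ) h
  simp only [map_mul, Complex.conj_conj, Complex.conj_ofReal] at h2
  push_cast at h2
  rw [leadingCoeff, hp, ← h2, mul_inv_cancel_left₀ (mul_ne_zero two_ne_zero hpi)]

/-! ### Orthogonality and zeros -/

lemma ae_norm_eq_one {μ : Measure ℂ} (hs : measSupport μ ⊆ Metric.sphere (0 : ℂ) 1) :
    ∀ᵐ z ∂μ, ‖z‖ = 1 := by
  refine measure_null_of_locally_null _ fun z hz => ?_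
  have h : z ∉ measSupport μ := fun h => hz (by simpa using hs h)
  simp only [measSupport, Set.mem_ofPred_eq, not_forall, not_not] at h
  obtain ⟨U, hU, h0⟩ := h
  exact ⟨U, mem_nhdsWithin_of_mem_nhds hU, h0⟩

lemma integrable_of_continuous {μ : Measure ℂ} [IsProbabilityMeasure μ]
    (hS : ∀ᵐ z ∂μ, ‖z‖ = 1) {f : ℂ → ℂ} (hf : Continuous f) : Integrable f μ := by
  obtain ⟨C, hC⟩ := (isCompact_sphere (0 : ℂ) 1).exists_bound_of_continuousOn hf.continuousOn
  refine Integrable.of_bound hf.aestronglyMeasurable C ?_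
  filter_upwards [hS] with z hz
  exact hC z (by simpa using hz)

section orth
variable {μ : Measure ℂ} {p : ℕ → ℂ[X]} {κ : ℕ → ℝ}

lemma OrthonormalPolys.natDegree (h : OrthonormalPolys μ p κ) (n : ℕ) : (p n).natDegree = n :=
  natDegree_eq_of_degree_eq_some (h.1 n)

lemma OrthonormalPolys.coeff (h : OrthonormalPolys μ p κ) (n : ℕ) : (p n).coeff n = κ n := by
  rw [← h.2.2.1 n, leadingCoeff, h.natDegree]

lemma OrthonormalPolys.kappa_ne (h : OrthonormalPolys μ p κ) (n : ℕ) : (κ n : ℂ) ≠ 0 := by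
  exact_mod_cast (h.2.1 n).ne'

lemma continuous_conj_mul (f g : ℂ[X]) :
    Continuous fun z => starRingEnd ℂ (f.eval z) * g.eval z :=
  (Complex.continuous_conj.comp f.continuous).mul g.continuous

/-- Subtracting `c p_m` from `f`, where `m` bounds the degree of `f`, lowers this bound. -/
lemma natDegree_lower (h : OrthonormalPolys μ p κ) {m : ℕ} {f : ℂ[X]} (hf : f.degree < (m + 1 : ℕ)) :
    (f - C (f.coeff m / κ m) * p m).degree < m := by
  rw [degree_lt_iff_coeff_zero] at hf ⊢
  intro k hk
  rcases hk.eq_or_lt with rfl | hk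
  · simp [h.coeff, h.kappa_ne]
  · have : (p m).coeff k = 0 := coeff_eq_zero_of_natDegree_lt (by rwa [h.natDegree])
    simp [hf k hk, this]

variable [IsProbabilityMeasure μ]

lemma inner_sub (hS : ∀ᵐ z ∂μ, ‖z‖ = 1) (q f g : ℂ[X]) (c : ℂ) :
    ∫ z, starRingEnd ℂ (q.eval z) * f.eval z ∂μ =
      ∫ z, starRingEnd ℂ (q.eval z) * (f - C c * g).eval z ∂μ +
        c * ∫ z, starRingEnd ℂ (q.eval z) * g.eval z ∂μ := by
  rw [← integral_const_mul, ← integral_add]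
  · congr 1; ext z; simp; ring
  · exact integrable_of_continuous hS (continuous_conj_mul _ _)
  · exact integrable_of_continuous hS (continuous_const.mul (continuous_conj_mul _ _))

/-- `p_n` is orthogonal to every polynomial of degree less than `n`. -/
lemma inner_lower (hS : ∀ᵐ z ∂μ, ‖z‖ = 1) (h : OrthonormalPolys μ p κ) (n : ℕ) :
    ∀ m ≤ n, ∀ f : ℂ[X], f.degree < m →
      ∫ z, starRingEnd ℂ ((p n).eval z) * f.eval z ∂μ = 0 := by
  intro m
  induction m with
  | zero =>
    intro _ f hf
    have : f = 0 := by
      rw [← degree_eq_bot]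
      exact Nat.WithBot.lt_zero_iff.1 (by simpa using hf)
    simp [this]
  | succ m ih =>
    intro hm f hf
    rw [inner_sub hS _ f (p m) (f.coeff m / κ m), ih (by omega) _ (natDegree_lower h hf),
      h.2.2.2, if_neg (by omega)]
    simp

/-- The inner product with `p_n` reads off the coefficient of `z ^ n`. -/
lemma inner_top (hS : ∀ᵐ z ∂μ, ‖z‖ = 1) (h : OrthonormalPolys μ p κ) {n : ℕ} {f : ℂ[X]}
    (hf : f.natDegree ≤ n) :
    ∫ z, starRingEnd ℂ ((p n).eval z) * f.eval z ∂μ = f.coeff n / κ n := by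
  rw [inner_sub hS _ f (p n) (f.coeff n / κ n), inner_lower hS h n n le_rfl _
    (natDegree_lower h ?_), h.2.2.2, if_pos rfl]
  · simp
  · exact degree_le_natDegree.trans_lt (by exact_mod_cast Nat.lt_succ_of_le hf)

/-- The zeros of `p_n` lie in the open unit disk: if `p_n = (z - w) q`, then `z q = p_n + w q` with
`q` orthogonal to `p_n`, so that `‖q‖² = 1 + |w|² ‖q‖²`. -/
lemma zeros_in_disk (hS : ∀ᵐ z ∂μ, ‖z‖ = 1) (h : OrthonormalPolys μ p κ) (n : ℕ) (w : ℂ)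
    (hw : (p n).eval w = 0) : ‖w‖ < 1 := by
  obtain ⟨q, hq⟩ := dvd_iff_isRoot.2 hw
  have hp0 : p n ≠ 0 := fun h0 => h.kappa_ne n (by rw [← h.coeff, h0, coeff_zero])
  have hq0 : q ≠ 0 := by rintro rfl; exact hp0 (by simpa using hq)
  have hqd : q.degree < n := by
    have h1 := h.1 n
    rw [hq, degree_mul, degree_X_sub_C, degree_eq_natDegree hq0] at h1
    rw [degree_eq_natDegree hq0]
    norm_cast at h1 ⊢
    omega
  have hpq := inner_lower hS h n n le_rfl q hqd
  have hqp : ∫ z, starRingEnd ℂ (q.eval z) * (p n).eval z ∂μ = 0 := by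
    have := congrArg (starRingEnd ℂ) hpq
    rw [← integral_conj] at this
    simpa [mul_comm] using this
  have hpp : ∫ z, starRingEnd ℂ ((p n).eval z) * (p n).eval z ∂μ = 1 := by
    rw [h.2.2.2, if_pos rfl]
  have key : ∫ z, starRingEnd ℂ (q.eval z) * q.eval z ∂μ = 1 +
      (‖w‖ ^ 2 : ℝ) * ∫ z, starRingEnd ℂ (q.eval z) * q.eval z ∂μ := by
    have e : ∀ᵐ z ∂μ, starRingEnd ℂ (q.eval z) * q.eval z =
        starRingEnd ℂ ((p n).eval z) * (p n).eval z +
        (w * (starRingEnd ℂ ((p n).eval z) * q.eval z) +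
        (starRingEnd ℂ w * (starRingEnd ℂ (q.eval z) * (p n).eval z) +
        (‖w‖ ^ 2 : ℝ) * (starRingEnd ℂ (q.eval z) * q.eval z))) := by
      filter_upwards [hS] with z hz
      have hz' : z * starRingEnd ℂ z = 1 := by
        rw [Complex.mul_conj, Complex.normSq_eq_norm_sq, hz]; simp
      have hw' : w * starRingEnd ℂ w = (‖w‖ ^ 2 : ℝ) := by
        rw [Complex.mul_conj, Complex.normSq_eq_norm_sq]
      rw [← hw', hq]
      simp only [eval_mul, eval_sub, eval_X, eval_C, map_mul, map_sub]
      linear_combination (-(starRingEnd ℂ (q.eval z) * q.eval z)) * hz'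
    have i1 := integrable_of_continuous hS (continuous_conj_mul (p n) (p n))
    have i2 := (integrable_of_continuous hS (continuous_conj_mul (p n) q)).const_mul w
    have i3 := (integrable_of_continuous hS (continuous_conj_mul q (p n))).const_mul
      (starRingEnd ℂ w)
    have i4 := (integrable_of_continuous hS (continuous_conj_mul q q)).const_mul
      ((‖w‖ ^ 2 : ℝ) : ℂ)
    conv_lhs => rw [integral_congr_ae e]
    rw [integral_add i1, integral_add i2, integral_add i3 i4,
      integral_const_mul, integral_const_mul, integral_const_mul, hpp, hpq, hqp]
    · ring
    · exact i3.add i4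
    · exact i2.add (i3.add i4)
  have hr : ∫ z, starRingEnd ℂ (q.eval z) * q.eval z ∂μ =
      ((∫ z, ‖q.eval z‖ ^ 2 ∂μ : ℝ) : ℂ) := by
    rw [← integral_complex_ofReal]
    congr 1; ext z
    rw [mul_comm, Complex.mul_conj, Complex.normSq_eq_norm_sq]
  rw [hr] at key
  have key' : ∫ z, ‖q.eval z‖ ^ 2 ∂μ = 1 + ‖w‖ ^ 2 * ∫ z, ‖q.eval z‖ ^ 2 ∂μ := by
    exact_mod_cast key
  have hnn : 0 ≤ ∫ z, ‖q.eval z‖ ^ 2 ∂μ := integral_nonneg fun z => by positivity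
  by_contra! hw1
  nlinarith [one_le_pow₀ hw1 (n := 2)]

/-! ### Distance formula -/

/-- The distance of `Q / p_n` from `1` in `L²(dθ/2π)` is determined by the norm of `Q` in `L²(μ)`
and the ratio of leading coefficients. -/
lemma ratio_formula (hS : ∀ᵐ z ∂μ, ‖z‖ = 1) (h : OrthonormalPolys μ p κ) {n : ℕ} {Q : ℂ[X]}
    (hQ : Q.natDegree ≤ n) :
    (∫ θ in (0 : ℝ)..(2 * Real.pi), ‖Q.eval (Complex.exp (θ * Complex.I)) /
        (p n).eval (Complex.exp (θ * Complex.I)) - 1‖ ^ 2) / (2 * Real.pi) =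
      ∫ z, ‖Q.eval z‖ ^ 2 ∂μ - 2 * (Q.coeff n / κ n).re + 1 := by
  have hz := zeros_in_disk hS h n
  have hp := h.natDegree n
  obtain ⟨u, v, hu, hv, huv⟩ := exists_decomp hp hQ hz
  have hU := starPoly_natDegree hu
  set U := starPoly n u with hUdef
  have hμ : ((∫ z, ‖Q.eval z‖ ^ 2 ∂μ : ℝ) : ℂ) =
      starRingEnd ℂ (U.coeff n / κ n) + v.coeff n / κ n := by
    rw [← inner_top hS h hU, ← inner_top hS h hv, ← integral_conj, ← integral_add,
      ← integral_complex_ofReal]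
    · refine integral_congr_ae ?_
      filter_upwards [hS] with z hz1
      have h1 := decomp_circle hp hQ hu huv hz1
      rw [mul_comm, Complex.mul_conj, Complex.normSq_eq_norm_sq] at h1
      rw [h1, map_mul, Complex.conj_conj]
      ring
    · exact integrable_of_continuous hS (Complex.continuous_conj.comp (continuous_conj_mul _ _))
    · exact integrable_of_continuous hS (continuous_conj_mul _ _)
  have he : Continuous fun θ : ℝ => Complex.exp (θ * Complex.I) := by fun_prop
  have hpne : ∀ θ : ℝ, (p n).eval (Complex.exp (θ * Complex.I)) ≠ 0 := by
    intro θ h0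
    have := hz _ h0
    rw [Complex.norm_exp_ofReal_mul_I] at this
    exact lt_irrefl _ this
  have hcont : ∀ f : ℂ[X], Continuous fun θ : ℝ => f.eval (Complex.exp (θ * Complex.I)) /
      (p n).eval (Complex.exp (θ * Complex.I)) := fun f =>
    (f.continuous.comp he).div ((p n).continuous.comp he) hpne
  have hI : ∀ f : ℂ[X], f.natDegree ≤ n → ∫ θ in (0 : ℝ)..(2 * Real.pi),
      f.eval (Complex.exp (θ * Complex.I)) / (p n).eval (Complex.exp (θ * Complex.I)) =
        2 * Real.pi * (f.coeff n / κ n) := by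
    intro f hf
    rw [integral_div hp hf hz, h.2.2.1]
  have hIc : ∀ f : ℂ[X], f.natDegree ≤ n → ∫ θ in (0 : ℝ)..(2 * Real.pi),
      starRingEnd ℂ (f.eval (Complex.exp (θ * Complex.I)) /
        (p n).eval (Complex.exp (θ * Complex.I))) =
        2 * Real.pi * starRingEnd ℂ (f.coeff n / κ n) := by
    intro f hf
    rw [intervalIntegral.integral_of_le Real.two_pi_pos.le, integral_conj,
      ← intervalIntegral.integral_of_le Real.two_pi_pos.le, hI f hf]
    simp only [map_mul, Complex.conj_ofReal, Complex.conj_ofNat]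
  have hpt : ∀ θ : ℝ, ((‖Q.eval (Complex.exp (θ * Complex.I)) /
      (p n).eval (Complex.exp (θ * Complex.I)) - 1‖ ^ 2 : ℝ) : ℂ) =
      (starRingEnd ℂ (U.eval (Complex.exp (θ * Complex.I)) /
        (p n).eval (Complex.exp (θ * Complex.I))) +
      v.eval (Complex.exp (θ * Complex.I)) / (p n).eval (Complex.exp (θ * Complex.I))) -
      (Q.eval (Complex.exp (θ * Complex.I)) / (p n).eval (Complex.exp (θ * Complex.I)) +
      starRingEnd ℂ (Q.eval (Complex.exp (θ * Complex.I)) /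
        (p n).eval (Complex.exp (θ * Complex.I)))) + 1 := by
    intro θ
    have h1 := decomp_circle hp hQ hu huv (Complex.norm_exp_ofReal_mul_I θ)
    have h2 := hpne θ
    have h3 : starRingEnd ℂ ((p n).eval (Complex.exp (θ * Complex.I))) ≠ 0 :=
      (_root_.map_ne_zero _).2 h2
    rw [← Complex.normSq_eq_norm_sq, ← Complex.mul_conj]
    simp only [map_sub, map_div₀, map_one]
    rw [← hUdef] at h1
    field_simp
    linear_combination h1
  have hC := fun f : ℂ[X] => (hcont f).intervalIntegrable (μ := volume) 0 (2 * Real.pi)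
  have hCc : ∀ f : ℂ[X], IntervalIntegrable (fun θ : ℝ => starRingEnd ℂ
      (f.eval (Complex.exp (θ * Complex.I)) / (p n).eval (Complex.exp (θ * Complex.I))))
      volume 0 (2 * Real.pi) := fun f =>
    (Complex.continuous_conj.comp (hcont f)).intervalIntegrable 0 (2 * Real.pi)
  have hfin : ((∫ θ in (0 : ℝ)..(2 * Real.pi), ‖Q.eval (Complex.exp (θ * Complex.I)) /
        (p n).eval (Complex.exp (θ * Complex.I)) - 1‖ ^ 2 : ℝ) : ℂ) =
      2 * Real.pi * (((∫ z, ‖Q.eval z‖ ^ 2 ∂μ : ℝ) : ℂ) -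
        (Q.coeff n / κ n + starRingEnd ℂ (Q.coeff n / κ n)) + 1) := by
    rw [← intervalIntegral.integral_ofReal]
    simp only [hpt]
    rw [intervalIntegral.integral_add (((hCc U).add (hC v)).sub ((hC Q).add (hCc Q)))
        intervalIntegrable_const,
      intervalIntegral.integral_sub ((hCc U).add (hC v)) ((hC Q).add (hCc Q)),
      intervalIntegral.integral_add (hCc U) (hC v), intervalIntegral.integral_add (hC Q) (hCc Q),
      hI v hv, hI Q hQ, hμ, hIc U hU, hIc Q hQ, intervalIntegral.integral_const]
    simp only [sub_zero, Complex.real_smul, mul_one]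
    push_cast
    ring
  rw [Complex.add_conj] at hfin
  have hfin' : (∫ θ in (0 : ℝ)..(2 * Real.pi), ‖Q.eval (Complex.exp (θ * Complex.I)) /
        (p n).eval (Complex.exp (θ * Complex.I)) - 1‖ ^ 2) =
      2 * Real.pi * ((∫ z, ‖Q.eval z‖ ^ 2 ∂μ) - 2 * (Q.coeff n / κ n).re + 1) := by
    exact_mod_cast hfin
  rw [hfin', mul_div_cancel_left₀ _ Real.two_pi_pos.ne']

end orth

theorem circle_L2_convergence_of_ratio
    (μ : Measure ℂ) [IsProbabilityMeasure μ]
    (hs : measSupport μ ⊆ Metric.sphere (0 : ℂ) 1) (hi : (measSupport μ).Infinite)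
    (p : ℕ → Polynomial ℂ) (κ : ℕ → ℝ) (hON : OrthonormalPolys μ p κ)
    (Q : ℕ → Polynomial ℂ) (hQdeg : ∀ n, (Q n).degree = n)
    (hQnorm : Tendsto (fun n => Real.sqrt (∫ z, ‖(Q n).eval z‖ ^ 2 ∂μ)) atTop (𝓝 1))
    (hQlead : Tendsto (fun n => (Q n).leadingCoeff / (κ n : ℂ)) atTop (𝓝 1)) :
    Tendsto
      (fun n => (∫ θ in (0 : ℝ)..(2 * Real.pi),
        ‖(Q n).eval (Complex.exp (θ * Complex.I)) /
            (p n).eval (Complex.exp (θ * Complex.I)) - 1‖ ^ 2) / (2 * Real.pi))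
      atTop (𝓝 0) := by
  have hS := ae_norm_eq_one hs
  have hnd : ∀ n, (Q n).natDegree = n := fun n => natDegree_eq_of_degree_eq_some (hQdeg n)
  have hlc : ∀ n, (Q n).coeff n = (Q n).leadingCoeff := fun n => by rw [leadingCoeff, hnd]
  simp only [fun n => ratio_formula hS hON (hnd n).le, hlc]
  have h1 : Tendsto (fun n => ∫ z, ‖(Q n).eval z‖ ^ 2 ∂μ) atTop (𝓝 1) := by
    have h2 := hQnorm.pow 2
    simp only [one_pow] at h2
    refine h2.congr fun n => Real.sq_sqrt (integral_nonneg fun z => by positivity)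
  have h2 := (Complex.continuous_re.tendsto _).comp hQlead
  have h3 := (h1.sub (h2.const_mul 2)).add_const 1
  have h0 : (1 : ℝ) - 2 * Complex.re 1 + 1 = 0 := by norm_num
  rw [h0] at h3
  exact h3
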